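/- Let β be a nonempty permutation and let π = B(β) be its 2413-balloon. Then: μ(1,π) = 4 if β = 1; μ(1,π) = −6 if β = 2413; μ(1,π) = 2·μ(1,β) if β is a 2413-balloon; and μ(1,π) = μ(1,β) in all remaining cases. -/

import Mathlib

/-!
The permutation pattern poset and its Möbius function.

A permutation of length `n` is represented as an element of the symmetric
group on `Fin n`; the collection of all permutations of all lengths is the
sigma type `PPerm`.  Pattern containment `PPerm.Le` makes `PPerm` into the
permutation pattern poset, and `mu` is its Möbius function, defined by the
usual recursion `μ(σ,σ) = 1`, `μ(σ,π) = -∑_{σ ≤ λ < π} μ(σ,λ)` for `σ < π`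
and `μ(σ,π) = 0` otherwise.
-/

open scoped Classical

/-- A permutation of an arbitrary finite length `n`, as an element of the
symmetric group on `Fin n`. -/
abbrev PPerm : Type := Σ n : ℕ, Equiv.Perm (Fin n)

namespace PPerm

/-- Classical pattern containment `σ ≤ π`: there is a strictly increasing map
of positions along which `π` realises the same relative order as `σ`. -/
def Le (σ π : PPerm) : Prop :=
  ∃ f : Fin σ.1 → Fin π.1, StrictMono f ∧
    ∀ a b : Fin σ.1, σ.2 a < σ.2 b ↔ π.2 (f a) < π.2 (f b)

/-- Strict pattern containment. -/
def Lt (σ π : PPerm) : Prop := Le σ π ∧ σ ≠ π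

/-- The permutation `1` of length one. -/
def one : PPerm := ⟨1, 1⟩

/-- The direct sum `α ⊕ β` of two permutations: `β` is placed after and
above `α`. -/
def dsum (α β : PPerm) : PPerm :=
  ⟨α.1 + β.1, finSumFinEquiv.symm.trans ((Equiv.sumCongr α.2 β.2).trans finSumFinEquiv)⟩

end PPerm

/-- Fuelled recursion computing the Möbius function of the permutation
pattern poset.  Any `λ` with `σ ≤ λ < π` has length `< |π|`, so for any
fuel `≥ |π| + 1` this computes the standard recursion
`μ(σ,σ) = 1`, `μ(σ,π) = -∑_{σ ≤ λ < π} μ(σ,λ)` for `σ < π`, and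
`μ(σ,π) = 0` when `σ ≰ π`. -/
noncomputable def muAux : ℕ → PPerm → PPerm → ℤ
  | 0, _, _ => 0
  | n + 1, σ, π =>
    if σ = π then 1
    else if PPerm.Le σ π then
      - ∑ m ∈ Finset.range π.1,
          ∑ p ∈ Finset.univ.filter
              (fun p : Equiv.Perm (Fin m) => PPerm.Le σ ⟨m, p⟩ ∧ PPerm.Le ⟨m, p⟩ π),
            muAux n σ ⟨m, p⟩
    else 0

/-- The Möbius function of the permutation pattern poset. -/
noncomputable def mu (σ π : PPerm) : ℤ := muAux (π.1 + 1) σ π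

/-- The closed interval `[σ, π]` of the permutation pattern poset, as a
finset (any `λ ≤ π` has length `≤ |π|`). -/
noncomputable def intervalCC (σ π : PPerm) : Finset PPerm :=
  (Finset.range (π.1 + 1)).biUnion fun m =>
    (Finset.univ.filter fun p : Equiv.Perm (Fin m) =>
        PPerm.Le σ ⟨m, p⟩ ∧ PPerm.Le ⟨m, p⟩ π).image fun p => (⟨m, p⟩ : PPerm)

/-- The half-open interval `[σ, π)` of the permutation pattern poset. -/
noncomputable def intervalCO (σ π : PPerm) : Finset PPerm :=
  (intervalCC σ π).filter fun lam => lam ≠ π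

/-- `π` is the 2413-balloon `B(β)` of `β`: writing `b = |β|`, the permutation
`π` has length `b + 4` and (1-indexed) entry sequence
`2, b+4, β(1)+2, …, β(b)+2, 1, b+3`.  In the 0-indexed representation used
here: position `0` has value `1`, position `1` has value `b+3`, position
`t+2` has value `β(t)+2` for `t < b`, position `b+2` has value `0`, and
position `b+3` has value `b+2`. -/
def IsBalloon2413 (β π : PPerm) : Prop :=
  π.1 = β.1 + 4 ∧
    ∀ p : Fin π.1,
      ((p : ℕ) = 0 → (π.2 p : ℕ) = 1) ∧
      ((p : ℕ) = 1 → (π.2 p : ℕ) = β.1 + 3) ∧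
      (∀ t : Fin β.1, (p : ℕ) = (t : ℕ) + 2 → (π.2 p : ℕ) = (β.2 t : ℕ) + 2) ∧
      ((p : ℕ) = β.1 + 2 → (π.2 p : ℕ) = 0) ∧
      ((p : ℕ) = β.1 + 3 → (π.2 p : ℕ) = β.1 + 2)

/-- The permutation `2413` (0-indexed values `1 3 0 2`). -/
noncomputable def p2413 : PPerm :=
  ⟨4, Equiv.ofBijective (![1, 3, 0, 2] : Fin 4 → Fin 4) (by decide)⟩

/-!
The permutations below a 2413-balloon `B(β)` are the balloons of the permutations below `β` and the
permutations that miss one of the four frame points. Without one frame point, the other three can be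
added to `β` one after the other, each in a corner of what is already there. By inclusion-exclusion,
`μ(1, B(β))` is therefore determined by `μ(1, ·)` at `β` and by the sum of `μ(1, ·)` over the
permutations that miss a frame point. In the latter sum, adding the third corner point negates the
Möbius function, so for nonempty `β` everything cancels in pairs except for the permutations
contained in one with just two points added to `β`, in opposite corners. Their contribution vanishes
unless `β = 1`. The empty permutation is added to the poset as its bottom element; this does not
change `μ(1, ·)`, and it makes `2413` the balloon of the empty permutation.
-/

section LocallyFiniteOrderBot

variable {P M : Type*} [PartialOrder P] [LocallyFiniteOrderBot P] [AddCommGroup M]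

lemma eq_of_forall_sum_Iic_eq {f g : P → M}
    (h : ∀ a, ∑ b ∈ Finset.Iic a, f b = ∑ b ∈ Finset.Iic a, g b) (a : P) :
    f a = g a := by
  induction hn : (Finset.Iio a).card using Nat.strong_induction_on generalizing a with
  | _ n ih =>
    have below : ∀ b ∈ Finset.Iio a, f b = g b := fun b hb =>
      ih _ (hn ▸ Finset.card_lt_card
        (Finset.Iio_ssubset_Iio (Finset.mem_Iio.mp hb))) b rfl
    have key := h a
    simp only [← Finset.Iio_insert, Finset.sum_insert, Finset.mem_Iio, lt_irrefl,
      not_false_eq_true, Finset.sum_congr rfl below] at key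
    exact add_right_cancel key

lemma sum_Iic_comp_eq [DecidableEq P] {φ : P → P} [DecidablePred (· ∈ Set.range φ)]
    (hφ : Function.Injective φ) (le_map : ∀ b, b ≤ φ b) {a : P} {C : Finset P}
    (Iic_map : Finset.Iic (φ a) = C ∪ (Finset.Iic a).image φ)
    (map_mem_iff : ∀ b, φ b ∈ C ↔ φ b ≤ a) (f : P → M) :
    ∑ b ∈ Finset.Iic a, f (φ b) = ∑ b ∈ Finset.Iic (φ a), f b - ∑ b ∈ C, f b +
      ∑ b ∈ Finset.Iic a, if b ∈ Set.range φ then f b else 0 := by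
  have inter : C ∩ (Finset.Iic a).image φ = (Finset.Iic a).filter (· ∈ Set.range φ) := by
    ext c
    simp only [Finset.mem_inter, Finset.mem_image, Finset.mem_Iic, Finset.mem_filter, Set.mem_range]
    constructor
    · rintro ⟨hc, b, -, rfl⟩
      exact ⟨(map_mem_iff b).mp hc, b, rfl⟩
    · rintro ⟨hc, b, rfl⟩
      exact ⟨(map_mem_iff b).mpr hc, b, (le_map b).trans hc, rfl⟩
  have incl_excl := Finset.sum_union_inter (s₁ := C) (s₂ := (Finset.Iic a).image φ) (f := f)
  rw [← Iic_map, inter, Finset.sum_filter, Finset.sum_image hφ.injOn] at incl_excl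
  rw [eq_comm, sub_add_eq_add_sub, sub_eq_iff_eq_add', incl_excl]

end LocallyFiniteOrderBot

lemma cmp_eq_cmp_iff {α β : Type*} [LinearOrder α] [LinearOrder β] {x y : α} {x' y' : β} :
    cmp x y = cmp x' y' ↔ (x < y ↔ x' < y') ∧ (y < x ↔ y' < x') := by
  refine ⟨fun h => ⟨lt_iff_lt_of_cmp_eq_cmp h, lt_iff_lt_of_cmp_eq_cmp (cmp_eq_cmp_symm.mp h)⟩, ?_⟩
  rintro ⟨hlt, hgt⟩
  rcases lt_trichotomy x y with h | rfl | h
  · rw [h.cmp_eq_lt, (hlt.mp h).cmp_eq_lt]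
  · rw [cmp_self_eq_eq, eq_comm, cmp_eq_eq_iff]
    exact le_antisymm (not_lt.mp (mt hgt.mpr (lt_irrefl x))) (not_lt.mp (mt hlt.mpr (lt_irrefl x)))
  · rw [h.cmp_eq_gt, (hgt.mp h).cmp_eq_gt]

lemma exists_perm_strictMono_comp {α : Type*} [LinearOrder α] {n : ℕ} {f : Fin n → α}
    (hf : Function.Injective f) : ∃ t : Equiv.Perm (Fin n), StrictMono (f ∘ t) :=
  ⟨Tuple.sort f, (Tuple.monotone_sort f).strictMono_of_injective (hf.comp (Equiv.injective _))⟩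

lemma strictMono_eq_add_of_mem_Ico {n : ℕ} {f : Fin n → ℤ} (hf : StrictMono f) {a : ℤ}
    (hbox : ∀ i, f i ∈ Set.Ico a (a + n)) (i : Fin n) : f i = a + i := by
  have hlt (i : Fin n) : (f i - a).toNat < n := by
    obtain ⟨_, _⟩ := hbox i
    omega
  have mono : StrictMono fun i : Fin n => (⟨(f i - a).toNat, hlt i⟩ : Fin n) := fun i j hij => by
    have := hf hij
    have := (hbox i).1
    simp only [Fin.mk_lt_mk]
    omega
  have key : (f i - a).toNat = i := congrArg Fin.val (congrFun mono.eq_id i)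
  have := (hbox i).1
  omega

namespace PPerm

open Finset

lemma Le.length_le {σ π : PPerm} (h : Le σ π) : σ.1 ≤ π.1 := by
  obtain ⟨f, hf, -⟩ := h
  simpa using Fintype.card_le_of_injective f hf.injective

lemma Le.eq_of_length_le {σ π : PPerm} (h : Le σ π) (hlen : π.1 ≤ σ.1) : σ = π := by
  obtain ⟨n, σ⟩ := σ
  obtain ⟨m, π⟩ := π
  obtain rfl : n = m := h.length_le.antisymm hlen
  obtain ⟨f, hf, hσπ⟩ := h
  obtain rfl : f = id := hf.eq_id
  have mono : StrictMono fun i => π (σ.symm i) := fun a b hab => (hσπ _ _).mp (by simpa using hab)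
  congr 1
  ext i
  simpa using congrArg Fin.val (congrFun mono.eq_id (σ i)).symm

instance : PartialOrder PPerm where
  le := Le
  le_refl _ := ⟨id, strictMono_id, fun _ _ => Iff.rfl⟩
  le_trans := by
    rintro σ τ π ⟨f, hf, hστ⟩ ⟨g, hg, hτπ⟩
    exact ⟨g ∘ f, hg.comp hf, fun a b => (hστ a b).trans (hτπ _ _)⟩
  le_antisymm _ _ h h' := h.eq_of_length_le h'.length_le

instance : OrderBot PPerm where
  bot := ⟨0, 1⟩
  bot_le _ := ⟨Fin.elim0, fun a => a.elim0, fun a => a.elim0⟩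

noncomputable instance : LocallyFiniteOrderBot PPerm :=
  LocallyFiniteOrderBot.ofIic PPerm
    (fun π => ((range (π.1 + 1)).sigma fun _ => univ).filter (· ≤ π))
    fun π σ => by
      simp only [mem_filter, mem_sigma, mem_range, mem_univ, and_true, and_iff_right_iff_imp]
      exact fun h => Nat.lt_succ_of_le (Le.length_le h)

lemma length_lt_of_lt {σ π : PPerm} (h : σ < π) : σ.1 < π.1 :=
  lt_of_not_ge fun hlen => h.ne (Le.eq_of_length_le h.le hlen)

lemma eq_bot_of_length_eq_zero {σ : PPerm} (h : σ.1 = 0) : σ = ⊥ :=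
  (Le.eq_of_length_le (bot_le (a := σ)) h.le).symm

lemma eq_one_of_length_eq_one {σ : PPerm} (h : σ.1 = 1) : σ = one := by
  obtain ⟨n, σ⟩ := σ
  obtain rfl : n = 1 := h
  exact congrArg _ (Subsingleton.elim _ _)

lemma one_ne_bot : one ≠ ⊥ := fun h => one_ne_zero (congrArg Sigma.fst h)

lemma one_le_iff {σ : PPerm} : one ≤ σ ↔ σ ≠ ⊥ := by
  constructor
  · rintro h rfl
    exact one_ne_bot (le_bot_iff.mp h)
  · intro h
    have hpos : 0 < σ.1 := Nat.pos_of_ne_zero (mt eq_bot_of_length_eq_zero h)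
    exact ⟨fun _ => ⟨0, hpos⟩, Subsingleton.strictMono (α := Fin 1) _,
      fun a b => by simp [Subsingleton.elim (α := Fin 1) a b]⟩

/-! ### The Möbius function -/

lemma sum_range_muAux (n : ℕ) (σ π : PPerm) :
    ∑ m ∈ range π.1, ∑ p ∈ univ.filter
        (fun p : Equiv.Perm (Fin m) => Le σ ⟨m, p⟩ ∧ Le ⟨m, p⟩ π), muAux n σ ⟨m, p⟩ =
      ∑ τ ∈ Iio π with σ ≤ τ, muAux n σ τ := by
  rw [sum_sigma']
  refine sum_congr ?_ fun _ _ => rfl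
  ext τ
  simp only [mem_sigma, mem_range, mem_filter, mem_univ, true_and, mem_Iio]
  constructor
  · rintro ⟨hlen, hσ, hπ⟩
    exact ⟨lt_of_le_of_ne hπ fun h => hlen.ne (congrArg Sigma.fst h), hσ⟩
  · rintro ⟨hπ, hσ⟩
    exact ⟨length_lt_of_lt hπ, hσ, hπ.le⟩

lemma muAux_eq_mu {n : ℕ} (σ π : PPerm) (hn : π.1 < n) : muAux n σ π = mu σ π := by
  induction hπ : π.1 using Nat.strong_induction_on generalizing n π with
  | _ k ih =>
    obtain ⟨n, rfl⟩ := Nat.exists_eq_succ_of_ne_zero (Nat.ne_zero_of_lt hn)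
    rw [mu, muAux, muAux, sum_range_muAux, sum_range_muAux]
    congr 3
    refine sum_congr rfl fun τ hτ => ?_
    have hlt := length_lt_of_lt (mem_Iio.mp (mem_filter.mp hτ).1)
    rw [ih _ (hπ ▸ hlt) τ (hlt.trans_le (Nat.le_of_lt_succ hn)) rfl, ih _ (hπ ▸ hlt) τ hlt rfl]

lemma mu_self (σ : PPerm) : mu σ σ = 1 := by
  rw [mu, muAux, if_pos rfl]

lemma mu_eq_zero_of_not_le {σ π : PPerm} (h : ¬ σ ≤ π) : mu σ π = 0 := by
  rw [mu, muAux, if_neg (fun hσ => h hσ.le), if_neg (show ¬ Le σ π from h)]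

lemma sum_Iic_mu (σ π : PPerm) : ∑ τ ∈ Iic π, mu σ τ = if σ = π then 1 else 0 := by
  have restrict : ∑ τ ∈ Iio π with σ ≤ τ, mu σ τ = ∑ τ ∈ Iio π, mu σ τ :=
    sum_filter_of_ne fun τ _ h => not_imp_comm.mp mu_eq_zero_of_not_le h
  rw [← Iio_insert, sum_insert (by simp), ← restrict]
  by_cases hle : σ ≤ π
  · rw [mu, muAux, sum_range_muAux, if_pos (show Le σ π from hle),
      sum_congr rfl fun τ hτ => muAux_eq_mu σ τ
        (length_lt_of_lt (mem_Iio.mp (mem_filter.mp hτ).1))]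
    split_ifs with h
    · subst h
      rw [filter_false_of_mem fun τ hτ => (mem_Iio.mp hτ).not_ge, sum_empty, add_zero]
    · exact neg_add_cancel _
  · rw [mu_eq_zero_of_not_le hle, if_neg (fun h => hle h.le), zero_add, filter_false_of_mem
      fun τ hτ h => hle (h.trans (mem_Iio.mp hτ).le), sum_empty]

lemma sum_Iic_bot_sub_one (π : PPerm) :
    ∑ τ ∈ Iic π, ((if τ = ⊥ then 1 else 0) - if τ = one then 1 else 0 : ℤ) =
      if π = ⊥ then 1 else 0 := by
  simp only [sum_sub_distrib, sum_ite_eq', mem_Iic, bot_le, one_le_iff, if_true, ite_not]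
  split_ifs <;> rfl

/-! ### Patterns of finite point sets -/

section Patterns

/-- The position of `p` relative to `q`: the comparison of the abscissae and that of the
ordinates. -/
def relPos (p q : ℤ × ℤ) : Ordering × Ordering := (cmp p.1 q.1, cmp p.2 q.2)

lemma relPos_swap (p q : ℤ × ℤ) : (relPos p q).map Ordering.swap Ordering.swap = relPos q p := by
  simp only [relPos, Prod.map_apply, cmp_swap]

lemma relPos_eq_symm {p q p' q' : ℤ × ℤ} (h : relPos p q = relPos p' q') :
    relPos q p = relPos q' p' := by
  rw [← relPos_swap, h, relPos_swap]

lemma relPos_eq_eq_iff {p q : ℤ × ℤ} : relPos p q = (.eq, .eq) ↔ p = q := by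
  simp only [relPos, cmp_eq_eq_iff, Prod.ext_iff]

lemma eq_iff_eq_of_relPos_eq {p q p' q' : ℤ × ℤ} (h : relPos p q = relPos p' q') :
    p = q ↔ p' = q' := by
  rw [← relPos_eq_eq_iff, h, relPos_eq_eq_iff]

/-- Two families of points are in the same relative order, in both coordinates. -/
def SameOrder {ι : Type*} (e e' : ι → ℤ × ℤ) : Prop :=
  ∀ i j, relPos (e i) (e j) = relPos (e' i) (e' j)

namespace SameOrder

variable {ι κ : Type*} {e e' e'' : ι → ℤ × ℤ}

lemma symm (h : SameOrder e e') : SameOrder e' e := fun i j => (h i j).symm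

lemma trans (h : SameOrder e e') (h' : SameOrder e' e'') : SameOrder e e'' :=
  fun i j => (h i j).trans (h' i j)

lemma comp (h : SameOrder e e') (f : κ → ι) : SameOrder (e ∘ f) (e' ∘ f) :=
  fun i j => h (f i) (f j)

lemma eq_iff (h : SameOrder e e') {i j : ι} : e i = e j ↔ e' i = e' j :=
  eq_iff_eq_of_relPos_eq (h i j)

lemma injective (h : SameOrder e e') (he : Function.Injective e) : Function.Injective e' :=
  fun _ _ hij => he (h.eq_iff.mpr hij)

lemma sumElim {v w : κ → ℤ × ℤ} (hvw : SameOrder v w) (he : SameOrder e e')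
    (hcross : ∀ k i, relPos (v k) (e i) = relPos (w k) (e' i)) :
    SameOrder (Sum.elim v e) (Sum.elim w e') := by
  rintro (k | i) (l | j)
  exacts [hvw k l, hcross k j, relPos_eq_symm (hcross l i), he i j]

lemma exists_comp [Fintype ι] [Fintype κ] (he : SameOrder e e') {g : κ → ℤ × ℤ}
    (hg : univ.image g = univ.image e) :
    ∃ f : κ → ι, e ∘ f = g ∧ univ.image (e' ∘ f) = univ.image e' := by
  have : ∀ k, ∃ i, e i = g k := fun k => by
    have hk := mem_image_of_mem g (mem_univ k)
    rw [hg] at hk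
    simpa only [mem_image, mem_univ, true_and] using hk
  choose f hf using this
  obtain rfl : e ∘ f = g := funext hf
  refine ⟨f, rfl, Subset.antisymm ?_ ?_⟩
  · rw [← image_image]
    exact image_subset_image (subset_univ _)
  · simp only [image_subset_iff, mem_univ, forall_const]
    intro i
    obtain ⟨k, -, hk⟩ := mem_image.mp (hg.symm ▸ mem_image_of_mem e (mem_univ i))
    exact mem_image.mpr ⟨k, mem_univ k, he.eq_iff.mp hk⟩

end SameOrder

/-- The points of the diagram of `σ`, from left to right. -/
def points (σ : PPerm) (i : Fin σ.1) : ℤ × ℤ := ((i : ℕ), (σ.2 i : ℕ))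

lemma relPos_points (σ : PPerm) (i j : Fin σ.1) :
    relPos (points σ i) (points σ j) = (cmp i j, cmp (σ.2 i) (σ.2 j)) := by
  have hcast : StrictMono fun k : Fin σ.1 => ((k : ℕ) : ℤ) :=
    Nat.strictMono_cast.comp Fin.val_strictMono
  exact Prod.ext (hcast.cmp_map_eq i j) (hcast.cmp_map_eq (σ.2 i) (σ.2 j))

lemma points_injective (σ : PPerm) : Function.Injective (points σ) := fun i j h => by
  rw [← relPos_eq_eq_iff, relPos_points] at h
  exact (cmp_eq_eq_iff _ _).mp (congrArg Prod.fst h)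

lemma le_iff_exists_sameOrder {σ π : PPerm} :
    σ ≤ π ↔ ∃ f : Fin σ.1 → Fin π.1, SameOrder (points σ) (points π ∘ f) := by
  simp only [SameOrder, Function.comp_apply, relPos_points, Prod.mk.injEq, cmp_eq_cmp_iff]
  refine exists_congr fun f => ⟨fun ⟨hf, hσπ⟩ i j => ?_, fun h => ?_⟩
  · exact ⟨⟨hf.lt_iff_lt.symm, hf.lt_iff_lt.symm⟩, hσπ i j, hσπ j i⟩
  · exact ⟨fun i j => (h i j).1.1.mp, fun i j => (h i j).2.1⟩

/-- The diagram of `σ`, with its lower left corner at the origin. -/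
def plot (σ : PPerm) : Finset (ℤ × ℤ) := univ.image (points σ)

/-- The points of `S` form the pattern `σ`. -/
def HasPattern (S : Finset (ℤ × ℤ)) (σ : PPerm) : Prop :=
  ∃ e : Fin σ.1 → ℤ × ℤ, SameOrder (points σ) e ∧ univ.image e = S

lemma hasPattern_plot (σ : PPerm) : HasPattern (plot σ) σ := ⟨points σ, fun _ _ => rfl, rfl⟩

/-- No two points of `S` lie on a common horizontal or vertical line. -/
def IsGeneric (S : Finset (ℤ × ℤ)) : Prop :=
  (S : Set (ℤ × ℤ)).Pairwise fun p q => p.1 ≠ q.1 ∧ p.2 ≠ q.2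

namespace HasPattern

variable {S T : Finset (ℤ × ℤ)} {σ π : PPerm}

lemma card_eq (h : HasPattern S σ) : S.card = σ.1 := by
  obtain ⟨e, he, rfl⟩ := h
  rw [card_image_of_injective _ (he.injective (points_injective σ)), card_fin]

lemma le_iff (h : HasPattern S π) : σ ≤ π ↔ ∃ T ⊆ S, HasPattern T σ := by
  obtain ⟨e, he, rfl⟩ := h
  rw [le_iff_exists_sameOrder]
  constructor
  · rintro ⟨f, hf⟩
    refine ⟨univ.image (e ∘ f), ?_, e ∘ f, hf.trans (he.comp f), rfl⟩
    rw [← image_image]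
    exact image_subset_image (subset_univ _)
  · rintro ⟨_, hsub, e', he', rfl⟩
    have : ∀ i, ∃ j, e j = e' i := fun i => by
      simpa using hsub (mem_image_of_mem e' (mem_univ i))
    choose f hf using this
    obtain rfl : e ∘ f = e' := funext hf
    exact ⟨f, he'.trans (he.comp f).symm⟩

lemma mono (hS : HasPattern S σ) (hT : HasPattern T π) (h : S ⊆ T) : σ ≤ π :=
  hT.le_iff.mpr ⟨S, h, hS⟩

lemma unique (hσ : HasPattern S σ) (hπ : HasPattern S π) : σ = π :=
  le_antisymm (hσ.mono hπ Subset.rfl) (hπ.mono hσ Subset.rfl)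

lemma isGeneric (h : HasPattern S σ) : IsGeneric S := by
  obtain ⟨e, he, rfl⟩ := h
  intro p hp q hq hpq
  obtain ⟨i, -, rfl⟩ := mem_image.mp hp
  obtain ⟨j, -, rfl⟩ := mem_image.mp hq
  have hij : i ≠ j := fun h => hpq (congrArg e h)
  have hrel := (he i j).symm.trans (relPos_points σ i j)
  have hσ : σ.2 i ≠ σ.2 j := σ.2.injective.ne hij
  simp only [relPos, Prod.mk.injEq] at hrel
  exact ⟨mt (eq_iff_eq_of_cmp_eq_cmp hrel.1).mp hij, mt (eq_iff_eq_of_cmp_eq_cmp hrel.2).mp hσ⟩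

lemma image_congr {ι : Type*} [Fintype ι] {e e' : ι → ℤ × ℤ} (h : HasPattern (univ.image e) σ)
    (he : SameOrder e e') : HasPattern (univ.image e') σ := by
  obtain ⟨g, hg, himage⟩ := h
  obtain ⟨f, rfl, himage'⟩ := he.exists_comp himage
  exact ⟨e' ∘ f, hg.trans (he.comp f), himage'⟩

lemma exists_sameOrder {ι : Type*} [Fintype ι] {e : ι → ℤ × ℤ} (h : HasPattern (univ.image e) σ)
    (hT : HasPattern T σ) : ∃ e', SameOrder e e' ∧ univ.image e' = T := by
  obtain ⟨g, hg, himage⟩ := h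
  obtain ⟨g', hg', rfl⟩ := hT
  have hgg' := hg.symm.trans hg'
  obtain ⟨f, rfl, himage'⟩ := hgg'.exists_comp himage.symm
  exact ⟨g' ∘ f, hgg'.comp f, himage'⟩

end HasPattern

variable {S T : Finset (ℤ × ℤ)} {α π : PPerm}

lemma IsGeneric.exists_hasPattern (hS : IsGeneric S) : ∃ σ, HasPattern S σ := by
  have inj {k : ℤ × ℤ → ℤ} (hk : ∀ p ∈ S, ∀ q ∈ S, p ≠ q → k p ≠ k q) :
      Function.Injective fun p : S => k p := fun p q hpq => by
    by_contra hne
    exact hk p p.2 q q.2 (Subtype.coe_ne_coe.mpr hne) hpq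
  obtain ⟨t, ht⟩ := exists_perm_strictMono_comp
    ((inj fun p hp q hq hpq => (hS hp hq hpq).1).comp S.equivFin.symm.injective)
  let e : Fin S.card ≃ S := t.trans S.equivFin.symm
  obtain ⟨u, hu⟩ := exists_perm_strictMono_comp
    ((inj fun p hp q hq hpq => (hS hp hq hpq).2).comp e.injective)
  refine ⟨⟨S.card, u⁻¹⟩, fun i => e i, fun i j => ?_, ?_⟩
  · rw [relPos_points]
    refine Prod.ext (ht.cmp_map_eq i j).symm ?_
    simpa [relPos] using (hu.cmp_map_eq (u⁻¹ i) (u⁻¹ j)).symm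
  · change univ.image (Subtype.val ∘ e) = S
    rw [← image_image, image_univ_of_surjective e.surjective,
      univ_eq_attach, attach_image_val]

/-- The pattern formed by a generic point set; it is arbitrary for other point sets. -/
noncomputable def pattern (S : Finset (ℤ × ℤ)) : PPerm := Classical.epsilon (HasPattern S)

lemma hasPattern_pattern (hS : IsGeneric S) : HasPattern S (pattern S) :=
  Classical.epsilon_spec hS.exists_hasPattern

lemma image_sumElim {ι κ γ : Type*} [Fintype ι] [Fintype κ] [DecidableEq γ]
    (v : κ → γ) (e : ι → γ) : univ.image (Sum.elim v e) = univ.image v ∪ univ.image e := by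
  ext p
  simp

lemma HasPattern.union_congr {κ : Type*} [Fintype κ] {v w : κ → ℤ × ℤ}
    (h : HasPattern (univ.image v ∪ S) π) (hS : HasPattern S α) (hT : HasPattern T α)
    (hvw : SameOrder v w) (hcross : ∀ k, ∀ p ∈ S, ∀ q ∈ T, relPos (v k) p = relPos (w k) q) :
    HasPattern (univ.image w ∪ T) π := by
  obtain ⟨e, he, rfl⟩ := hS
  obtain ⟨e', he', rfl⟩ := hT
  rw [← image_sumElim] at h ⊢
  exact h.image_congr (hvw.sumElim (he.symm.trans he') fun k i =>
    hcross k _ (mem_image_of_mem e (mem_univ i)) _ (mem_image_of_mem e' (mem_univ i)))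

lemma HasPattern.exists_eq_union {κ : Type*} [Fintype κ] {v : κ → ℤ × ℤ}
    (h : HasPattern (univ.image v ∪ S) π) (hS : HasPattern S α) (hT : HasPattern T π) :
    ∃ w T', T = univ.image w ∪ T' ∧ HasPattern T' α ∧ SameOrder v w ∧
      ∀ k, ∀ q ∈ T', ∃ p ∈ S, relPos (w k) q = relPos (v k) p := by
  obtain ⟨e, he, rfl⟩ := hS
  rw [← image_sumElim] at h
  obtain ⟨e', hee', rfl⟩ := h.exists_sameOrder hT
  refine ⟨e' ∘ Sum.inl, univ.image (e' ∘ Sum.inr), ?_, ⟨e' ∘ Sum.inr, ?_, rfl⟩,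
    hee'.comp Sum.inl, fun k q hq => ?_⟩
  · rw [← image_sumElim, Sum.elim_comp_inl_inr]
  · exact he.trans (hee'.comp Sum.inr)
  · obtain ⟨i, -, rfl⟩ := mem_image.mp hq
    exact ⟨e i, mem_image_of_mem e (mem_univ i), (hee' (Sum.inl k) (Sum.inr i)).symm⟩

lemma HasPattern.eq_image_of_subset_box (h : HasPattern S α) {a b : ℤ}
    (hbox : ∀ p ∈ S, p.1 ∈ Set.Ico a (a + α.1) ∧ p.2 ∈ Set.Ico b (b + α.1)) :
    S = univ.image fun i => (a, b) + points α i := by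
  obtain ⟨e, he, rfl⟩ := h
  have hrel i j : (cmp i j, cmp (α.2 i) (α.2 j)) = relPos (e i) (e j) :=
    (relPos_points α i j).symm.trans (he i j)
  have hmem i := hbox (e i) (mem_image_of_mem e (mem_univ i))
  have hx : StrictMono fun i => (e i).1 := fun i j =>
    (lt_iff_lt_of_cmp_eq_cmp (congrArg Prod.fst (hrel i j))).mp
  have hy : StrictMono fun j => (e (α.2.symm j)).2 := fun i j => by
    simpa using (lt_iff_lt_of_cmp_eq_cmp (congrArg Prod.snd
      (hrel (α.2.symm i) (α.2.symm j)))).mp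
  congr 1
  ext i : 2
  · exact strictMono_eq_add_of_mem_Ico hx (fun i => (hmem i).1) i
  · simpa [points] using strictMono_eq_add_of_mem_Ico hy (fun j => (hmem _).2) (α.2 i)

end Patterns

/-! ### Corner points -/

section Corners

variable {S T : Finset (ℤ × ℤ)} {p q : ℤ × ℤ} {α β τ : PPerm} {c d : Fin 4}

/-- The four corners, counterclockwise from the lower right one; `corner c` is the position of a
point in the `c`-th corner relative to the other points, so `c + 2` is the opposite corner. -/
def corner : Fin 4 → Ordering × Ordering := ![(.gt, .lt), (.gt, .gt), (.lt, .gt), (.lt, .lt)]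

lemma corner_injective : Function.Injective corner := by decide

lemma swap_corner : ∀ c, (corner c).map Ordering.swap Ordering.swap = corner (c + 2) := by decide

lemma corner_ne_eq : ∀ c, (corner c).1 ≠ .eq ∧ (corner c).2 ≠ .eq := by decide

lemma relPos_eq_corner_add_two (h : relPos p q = corner c) : relPos q p = corner (c + 2) := by
  rw [← relPos_swap, h, swap_corner]

lemma coords_ne_of_relPos_eq_corner (h : relPos p q = corner c) : p.1 ≠ q.1 ∧ p.2 ≠ q.2 := by
  have hc := corner_ne_eq c
  rw [← h] at hc
  exact hc.imp (mt (cmp_eq_eq_iff _ _).mpr) (mt (cmp_eq_eq_iff _ _).mpr)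

/-- `p` lies in the `c`-th corner of `insert p S`. -/
def IsCorner (c : Fin 4) (p : ℤ × ℤ) (S : Finset (ℤ × ℤ)) : Prop :=
  ∀ q ∈ S, relPos p q = corner c

namespace IsCorner

lemma mono (h : IsCorner c p T) (hST : S ⊆ T) : IsCorner c p S := fun q hq => h q (hST hq)

lemma notMem (h : IsCorner c p S) : p ∉ S := fun hp =>
  (coords_ne_of_relPos_eq_corner (h p hp)).1 rfl

lemma isGeneric_insert (h : IsCorner c p S) (hS : IsGeneric S) : IsGeneric (insert p S) := by
  rw [IsGeneric, coe_insert]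
  refine hS.insert fun q hq _ => ?_
  have hpq := coords_ne_of_relPos_eq_corner (h q hq)
  exact ⟨hpq, hpq.imp Ne.symm Ne.symm⟩

end IsCorner

/-- A point in the `c`-th corner around the diagram of a permutation of length `n`. -/
def cornerPoint (c : Fin 4) (n : ℕ) : ℤ × ℤ :=
  (![(n, -1), (n, n), (-1, n), (-1, -1)] : Fin 4 → ℤ × ℤ) c

lemma mem_plot_bounds (hp : p ∈ plot α) : 0 ≤ p.1 ∧ p.1 < α.1 ∧ 0 ≤ p.2 ∧ p.2 < α.1 := by
  obtain ⟨i, -, rfl⟩ := mem_image.mp hp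
  simp [points]

lemma isCorner_cornerPoint (c : Fin 4) (α : PPerm) : IsCorner c (cornerPoint c α.1) (plot α) := by
  intro p hp
  obtain ⟨_, _, _, _⟩ := mem_plot_bounds hp
  fin_cases c <;>
    simp only [relPos, corner, cornerPoint, Prod.mk.injEq, cmp_eq_lt_iff, cmp_eq_gt_iff,
      Matrix.cons_val, Fin.reduceFinMk, Fin.zero_eta, Fin.mk_one] <;>
    omega

/-- The permutation obtained from `α` by adding a point in the `c`-th corner. -/
noncomputable def addCorner (c : Fin 4) (α : PPerm) : PPerm :=
  pattern (insert (cornerPoint c α.1) (plot α))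

lemma HasPattern.insert_corner (hS : HasPattern S α) (hp : IsCorner c p S) :
    HasPattern (insert p S) (addCorner c α) := by
  have h : HasPattern (insert (cornerPoint c α.1) (plot α)) (addCorner c α) :=
    hasPattern_pattern ((isCorner_cornerPoint c α).isGeneric_insert (hasPattern_plot α).isGeneric)
  simpa using union_congr (κ := Unit) (v := fun _ => cornerPoint c α.1) (w := fun _ => p)
    (by simpa using h) (hasPattern_plot α) hS (fun _ _ => by simp [relPos])
    fun _ q hq q' hq' => (isCorner_cornerPoint c α q hq).trans (hp q' hq').symm

lemma HasPattern.exists_eq_insert_corner (hT : HasPattern T (addCorner c α)) :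
    ∃ p S, T = insert p S ∧ HasPattern S α ∧ IsCorner c p S := by
  have h := (hasPattern_plot α).insert_corner (isCorner_cornerPoint c α)
  obtain ⟨w, S, rfl, hS, -, hcross⟩ := exists_eq_union (κ := Unit)
    (v := fun _ => cornerPoint c α.1) (by simpa using h) (hasPattern_plot α) hT
  refine ⟨w (), S, by simp, hS, fun q hq => ?_⟩
  obtain ⟨p, hp, hpq⟩ := hcross () q hq
  exact hpq.trans (isCorner_cornerPoint c α p hp)

lemma length_addCorner (c : Fin 4) (α : PPerm) : (addCorner c α).1 = α.1 + 1 := by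
  have hcorner := isCorner_cornerPoint c α
  rw [← ((hasPattern_plot α).insert_corner hcorner).card_eq, card_insert_of_notMem hcorner.notMem,
    (hasPattern_plot α).card_eq]

lemma addCorner_bot (c : Fin 4) : addCorner c ⊥ = one :=
  eq_one_of_length_eq_one (length_addCorner c ⊥)

lemma addCorner_ne_bot (c : Fin 4) (α : PPerm) : addCorner c α ≠ ⊥ := fun h =>
  Nat.succ_ne_zero _ ((length_addCorner c α).symm.trans (congrArg Sigma.fst h))

lemma addCorner_eq_one_iff : addCorner c α = one ↔ α = ⊥ := by
  refine ⟨fun h => eq_bot_of_length_eq_zero ?_, ?_⟩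
  · exact Nat.succ_injective ((length_addCorner c α).symm.trans (congrArg Sigma.fst h))
  · rintro rfl
    exact addCorner_bot c

lemma le_addCorner_iff : τ ≤ addCorner c α ↔ τ ≤ α ∨ ∃ ρ ≤ α, τ = addCorner c ρ := by
  have hplot := hasPattern_plot α
  have hcorner := isCorner_cornerPoint c α
  rw [(hplot.insert_corner hcorner).le_iff, hplot.le_iff]
  constructor
  · rintro ⟨T, hT, hτ⟩
    by_cases hp : cornerPoint c α.1 ∈ T
    · have hsub : T.erase (cornerPoint c α.1) ⊆ plot α := subset_insert_iff.mp hT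
      obtain ⟨ρ, hρ⟩ := IsGeneric.exists_hasPattern (hplot.isGeneric.mono hsub)
      refine Or.inr ⟨ρ, hρ.mono hplot hsub, hτ.unique ?_⟩
      simpa only [insert_erase hp] using hρ.insert_corner (hcorner.mono hsub)
    · exact Or.inl ⟨T, (subset_insert_iff_of_notMem hp).mp hT, hτ⟩
  · rintro (⟨T, hT, hτ⟩ | ⟨ρ, hρ, rfl⟩)
    · exact ⟨T, hT.trans (subset_insert _ _), hτ⟩
    · obtain ⟨T, hT, hρ⟩ := hplot.le_iff.mp hρ
      exact ⟨_, insert_subset_insert _ hT, hρ.insert_corner (hcorner.mono hT)⟩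

lemma le_addCorner (c : Fin 4) (α : PPerm) : α ≤ addCorner c α :=
  le_addCorner_iff.mpr (.inl le_rfl)

lemma addCorner_mono (c : Fin 4) : Monotone (addCorner c) := fun α _ h =>
  le_addCorner_iff.mpr (.inr ⟨α, h, rfl⟩)

lemma addCorner_comm (c : Fin 4) (α : PPerm) :
    addCorner c (addCorner (c + 2) α) = addCorner (c + 2) (addCorner c α) := by
  obtain ⟨p, _, hT, hS, hp⟩ :=
    (hasPattern_plot (addCorner c (addCorner (c + 2) α))).exists_eq_insert_corner
  obtain ⟨q, S, rfl, hS, hq⟩ := hS.exists_eq_insert_corner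
  have hq' : IsCorner (c + 2) q (insert p S) := forall_mem_insert _ _ _ |>.mpr
    ⟨relPos_eq_corner_add_two (hp q (mem_insert_self q S)), hq⟩
  refine (hasPattern_plot _).unique ?_
  rw [hT, insert_comm]
  exact (hS.insert_corner (hp.mono (subset_insert q S))).insert_corner hq'

lemma addCorner_eq_addCorner (h : addCorner c α = addCorner d β) :
    (c = d ∧ α = β) ∨ (α = ⊥ ∧ β = ⊥) ∨
      (d = c + 2 ∧ ∃ γ, α = addCorner d γ ∧ β = addCorner c γ) := by
  obtain ⟨p, S, hT, hS, hp⟩ := (hasPattern_plot (addCorner c α)).exists_eq_insert_corner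
  obtain ⟨q, S', hT', hS', hq⟩ := (hasPattern_plot (addCorner d β)).exists_eq_insert_corner
  have hTT' : insert p S = insert q S' := by rw [← hT, h, hT']
  by_cases hpq : p = q
  · subst hpq
    obtain rfl : S = S' := by
      rw [← erase_insert hp.notMem, ← erase_insert hq.notMem, hTT']
    obtain rfl : α = β := hS.unique hS'
    rcases S.eq_empty_or_nonempty with rfl | ⟨r, hr⟩
    · have := eq_bot_of_length_eq_zero (hS.card_eq.symm.trans card_empty)
      exact Or.inr (Or.inl ⟨this, this⟩)
    · exact Or.inl ⟨corner_injective ((hp r hr).symm.trans (hq r hr)), rfl⟩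
  · have hqS : q ∈ S :=
      mem_of_mem_insert_of_ne (hTT' ▸ mem_insert_self q S') (Ne.symm hpq)
    have hpS' : p ∈ S' := mem_of_mem_insert_of_ne (hTT' ▸ mem_insert_self p S) hpq
    have hcd : d = c + 2 :=
      corner_injective ((hq p hpS').symm.trans (relPos_eq_corner_add_two (hp q hqS)))
    have hrest : S.erase q = S'.erase p := by
      rw [← erase_insert hp.notMem, ← erase_insert hq.notMem, hTT', erase_right_comm]
    obtain ⟨γ, hγ⟩ := IsGeneric.exists_hasPattern (hS.isGeneric.mono (erase_subset q S))
    have hqR : IsCorner d q (S.erase q) := hq.mono (hrest ▸ erase_subset p S')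
    refine Or.inr (Or.inr ⟨hcd, γ, hS.unique ?_, hS'.unique ?_⟩)
    · rw [← insert_erase hqS]
      exact hγ.insert_corner hqR
    · rw [← insert_erase hpS', ← hrest]
      exact hγ.insert_corner (hp.mono (erase_subset q S))

lemma addCorner_injective (c : Fin 4) : Function.Injective (addCorner c) := by
  intro α β h
  rcases addCorner_eq_addCorner h with ⟨-, h⟩ | ⟨rfl, rfl⟩ | ⟨hc, -⟩
  exacts [h, rfl, absurd hc (by grind)]

lemma addCorner_ne_addCorner (hcd : d ≠ c) (hcd' : d ≠ c + 2) (hα : α ≠ ⊥) :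
    addCorner c α ≠ addCorner d β := fun h => by
  rcases addCorner_eq_addCorner h with ⟨h, -⟩ | ⟨h, -⟩ | ⟨h, -⟩
  exacts [hcd h.symm, hα h, hcd' h]

lemma mu_one_bot : mu one ⊥ = 0 := mu_eq_zero_of_not_le fun h => one_le_iff.mp h rfl

lemma mu_one_addCorner (c : Fin 4) (α : PPerm) :
    mu one (addCorner c α) = -mu one α + (if α ∈ Set.range (addCorner c) then mu one α else 0) +
      ((if α = ⊥ then 1 else 0) - if α = one then 1 else 0) := by
  revert α
  refine eq_of_forall_sum_Iic_eq fun α => ?_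
  have Iic_addCorner : Iic (addCorner c α) = Iic α ∪ (Iic α).image (addCorner c) := by
    ext τ
    simp [le_addCorner_iff, eq_comm]
  rw [sum_Iic_comp_eq (addCorner_injective c) (le_addCorner c) Iic_addCorner
    (fun _ => mem_Iic)]
  simp only [sum_add_distrib, sum_neg_distrib, sum_Iic_mu, sum_Iic_bot_sub_one,
    eq_comm (a := one), addCorner_eq_one_iff]
  ring

lemma mu_one_addCorner_of_notMem_range (hα : α ≠ ⊥) (hrange : α ∉ Set.range (addCorner c)) :
    mu one (addCorner c α) = -mu one α := by
  have hone : α ≠ one := fun h => hrange ⟨⊥, (addCorner_bot c).trans h.symm⟩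
  rw [mu_one_addCorner, if_neg hrange, if_neg hα, if_neg hone, add_zero, sub_self, add_zero]

lemma mu_one_addCorner_one (c : Fin 4) : mu one (addCorner c one) = -1 := by
  rw [mu_one_addCorner, if_pos ⟨⊥, addCorner_bot c⟩, if_neg one_ne_bot, if_pos rfl, mu_self]
  norm_num

end Corners

/-! ### Balloons -/

section Balloons

variable {S T : Finset (ℤ × ℤ)} {v w : Fin 4 → ℤ × ℤ} {α : PPerm}

lemma eq_add_of_fin_four (c : Fin 4) : ∀ d, d = c ∨ d = c + 1 ∨ d = c + 2 ∨ d = c + 3 := by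
  decide +revert

/-- The points `v 0, v 1, v 2, v 3` surround `S` in the way in which a 2413-balloon surrounds its
inner permutation: each `v c` lies in the `c`-th corner as soon as `v (c + 1)` is left out. -/
def IsFrame (v : Fin 4 → ℤ × ℤ) (S : Finset (ℤ × ℤ)) : Prop :=
  ∀ c, IsCorner c (v c) (insert (v (c + 2)) (insert (v (c + 3)) S))

namespace IsFrame

lemma mono (h : IsFrame v T) (hST : S ⊆ T) : IsFrame v S := fun c =>
  (h c).mono (insert_subset_insert _ (insert_subset_insert _ hST))

lemma isCorner (h : IsFrame v S) (c : Fin 4) : IsCorner c (v c) S :=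
  (h c).mono ((subset_insert _ _).trans (subset_insert _ _))

lemma relPos_add_two (h : IsFrame v S) (c : Fin 4) : relPos (v c) (v (c + 2)) = corner c :=
  h c _ (mem_insert_self _ _)

lemma relPos_add_three (h : IsFrame v S) (c : Fin 4) : relPos (v c) (v (c + 3)) = corner c :=
  h c _ (mem_insert_of_mem (mem_insert_self _ _))

lemma relPos_add_one (h : IsFrame v S) (c : Fin 4) : relPos (v c) (v (c + 1)) = corner (c + 3) := by
  have := relPos_eq_corner_add_two (h.relPos_add_three (c + 1))
  rwa [show c + 1 + 3 = c by grind, show c + 1 + 2 = c + 3 by grind] at this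

lemma sameOrder (hv : IsFrame v S) (hw : IsFrame w T) : SameOrder v w := fun i j => by
  rcases eq_add_of_fin_four i j with rfl | rfl | rfl | rfl
  · rw [relPos_eq_eq_iff.mpr rfl, relPos_eq_eq_iff.mpr rfl]
  · rw [hv.relPos_add_one, hw.relPos_add_one]
  · rw [hv.relPos_add_two, hw.relPos_add_two]
  · rw [hv.relPos_add_three, hw.relPos_add_three]

lemma relPos_mem (h : IsFrame v S) (c : Fin 4) {p : ℤ × ℤ} (hp : p ∈ univ.image v ∪ S)
    (hne : p ≠ v c) : relPos (v c) p = corner c ∨ relPos (v c) p = corner (c + 3) := by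
  rcases mem_union.mp hp with hp | hp
  · obtain ⟨d, -, rfl⟩ := mem_image.mp hp
    rcases eq_add_of_fin_four c d with rfl | rfl | rfl | rfl
    exacts [absurd rfl hne, .inr (h.relPos_add_one c), .inl (h.relPos_add_two c),
      .inl (h.relPos_add_three c)]
  · exact .inl (h.isCorner c p hp)

lemma injective (h : IsFrame v S) : Function.Injective v := fun i j hij => by
  have hne {d : Fin 4} : relPos (v i) (v j) ≠ corner d := fun h =>
    (coords_ne_of_relPos_eq_corner h).1 (congrArg Prod.fst hij)
  rcases eq_add_of_fin_four i j with rfl | rfl | rfl | rfl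
  exacts [rfl, absurd (h.relPos_add_one i) hne, absurd (h.relPos_add_two i) hne,
    absurd (h.relPos_add_three i) hne]

lemma notMem (h : IsFrame v S) (c : Fin 4) : v c ∉ S := (h.isCorner c).notMem

lemma disjoint (h : IsFrame v S) : Disjoint (univ.image v) S := by
  simp only [disjoint_left, mem_image, mem_univ, true_and]
  rintro _ ⟨c, rfl⟩
  exact h.notMem c

end IsFrame

/-- A frame around the diagram of a permutation of length `n`. -/
def framePoint (n : ℕ) : Fin 4 → ℤ × ℤ := ![(n, -2), (n + 1, n), (-1, n + 1), (-2, -1)]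

/-- The diagram of the 2413-balloon of `β`, with the diagram of `β` in its usual place. -/
def balloonPlot (β : PPerm) : Finset (ℤ × ℤ) := univ.image (framePoint β.1) ∪ plot β

/-- The 2413-balloon of `β`, where `β` may be empty, so that `2413` is itself a balloon. -/
noncomputable def balloon (β : PPerm) : PPerm := pattern (balloonPlot β)

lemma isFrame_framePoint (β : PPerm) : IsFrame (framePoint β.1) (plot β) := by
  intro c q hq
  simp only [mem_insert] at hq
  rcases hq with rfl | rfl | hq
  on_goal 3 => obtain ⟨_, _, _, _⟩ := mem_plot_bounds hq
  all_goals
    fin_cases c <;>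
    simp only [relPos, corner, framePoint, Prod.mk.injEq, cmp_eq_lt_iff, cmp_eq_gt_iff,
      Matrix.cons_val, Fin.reduceFinMk, Fin.zero_eta, Fin.mk_one, Fin.reduceAdd] <;>
    omega

lemma hasPattern_balloonPlot (β : PPerm) : HasPattern (balloonPlot β) (balloon β) := by
  refine hasPattern_pattern fun p hp q hq hpq => ?_
  have hframe := isFrame_framePoint β
  have ne_of_frame {p q : ℤ × ℤ} (hp : p ∈ univ.image (framePoint β.1))
      (hq : q ∈ balloonPlot β) (hpq : p ≠ q) : p.1 ≠ q.1 ∧ p.2 ≠ q.2 := by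
    obtain ⟨c, -, rfl⟩ := mem_image.mp hp
    exact (hframe.relPos_mem c hq hpq.symm).elim coords_ne_of_relPos_eq_corner
      coords_ne_of_relPos_eq_corner
  rcases mem_union.mp hp with hp' | hp'
  · exact ne_of_frame hp' hq hpq
  rcases mem_union.mp hq with hq' | hq'
  · exact (ne_of_frame hq' hp hpq.symm).imp Ne.symm Ne.symm
  · exact (hasPattern_plot β).isGeneric hp' hq' hpq

lemma HasPattern.union_frame (hS : HasPattern S α) (hv : IsFrame v S) :
    HasPattern (univ.image v ∪ S) (balloon α) := by
  have hframe := isFrame_framePoint α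
  exact union_congr (hasPattern_balloonPlot α) (hasPattern_plot α) hS (hframe.sameOrder hv)
    fun c p hp q hq => (hframe.isCorner c p hp).trans (hv.isCorner c q hq).symm

lemma isFrame_iff : IsFrame v S ↔ (∀ c, IsCorner c (v c) S) ∧
    ∀ c, relPos (v c) (v (c + 2)) = corner c ∧ relPos (v c) (v (c + 3)) = corner c := by
  simp only [IsFrame, IsCorner, forall_mem_insert]
  grind

lemma HasPattern.exists_eq_union_frame (hT : HasPattern T (balloon α)) :
    ∃ v S, T = univ.image v ∪ S ∧ HasPattern S α ∧ IsFrame v S := by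
  have hframe := isFrame_framePoint α
  obtain ⟨v, S, rfl, hS, hv, hcross⟩ :=
    (hasPattern_balloonPlot α).exists_eq_union (hasPattern_plot α) hT
  refine ⟨v, S, rfl, hS, isFrame_iff.mpr ⟨fun c q hq => ?_, fun c => ⟨?_, ?_⟩⟩⟩
  · obtain ⟨p, hp, hpq⟩ := hcross c q hq
    exact hpq.trans (hframe.isCorner c p hp)
  · exact (hv c _).symm.trans (hframe.relPos_add_two c)
  · exact (hv c _).symm.trans (hframe.relPos_add_three c)

lemma length_balloon (β : PPerm) : (balloon β).1 = β.1 + 4 := by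
  have hframe := isFrame_framePoint β
  have hcard := (hasPattern_balloonPlot β).card_eq
  rw [balloonPlot, card_union_of_disjoint hframe.disjoint, (hasPattern_plot β).card_eq,
    card_image_of_injective _ hframe.injective, card_fin] at hcard
  exact hcard.symm.trans (add_comm 4 β.1)

lemma balloon_ne_addCorner (α β : PPerm) (c : Fin 4) : balloon α ≠ addCorner c β := fun h => by
  obtain ⟨v, S, hT, -, hv⟩ := (hasPattern_plot (balloon α)).exists_eq_union_frame
  obtain ⟨p, S', hT', -, hp⟩ := (hasPattern_plot (addCorner c β)).exists_eq_insert_corner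
  have hTT' : univ.image v ∪ S = insert p S' := by rw [← hT, h, hT']
  have hv_mem (d : Fin 4) : v d ∈ insert p S' :=
    hTT' ▸ mem_union_left _ (mem_image_of_mem v (mem_univ d))
  have hp_v (d : Fin 4) (hne : v d ≠ p) : relPos p (v d) = corner c :=
    hp _ (mem_of_mem_insert_of_ne (hv_mem d) hne)
  have hp_mem : p ∈ univ.image v ∪ S := hTT' ▸ mem_insert_self p S'
  rcases mem_union.mp hp_mem with hpv | hpS
  · obtain ⟨d, -, rfl⟩ := mem_image.mp hpv
    have h₁ := hp_v (d + 1) (hv.injective.ne (by grind))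
    have h₂ := hp_v (d + 2) (hv.injective.ne (by grind))
    rw [hv.relPos_add_one, ← h₂, hv.relPos_add_two] at h₁
    exact absurd (corner_injective h₁) (by grind)
  · have hp_v' (d : Fin 4) : corner (d + 2) = corner c :=
      (relPos_eq_corner_add_two (hv.isCorner d p hpS)).symm.trans
        (hp_v d fun h => hv.notMem d (h ▸ hpS))
    exact absurd (corner_injective ((hp_v' 0).trans (hp_v' 1).symm)) (by decide)

lemma balloon_injective : Function.Injective balloon := fun α β h => by
  obtain ⟨v, S, hT, hS, hv⟩ := (hasPattern_plot (balloon α)).exists_eq_union_frame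
  obtain ⟨w, S', hT', hS', hw⟩ := (hasPattern_plot (balloon β)).exists_eq_union_frame
  have hTT' : univ.image v ∪ S = univ.image w ∪ S' := by rw [← hT, h, hT']
  have hvw : v = w := funext fun c => by
    by_contra hne
    have hvw := hv.relPos_mem c (hTT' ▸ mem_union_left _ (mem_image_of_mem w (mem_univ c)))
      (Ne.symm hne)
    have hwv := hw.relPos_mem c (hTT' ▸ mem_union_left _ (mem_image_of_mem v (mem_univ c))) hne
    rcases hvw with hvw | hvw <;> rcases hwv with hwv | hwv <;>
      exact absurd (corner_injective ((relPos_eq_corner_add_two hvw).symm.trans hwv)) (by grind)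
  subst hvw
  obtain rfl : S = S' := by
    rw [← union_sdiff_cancel_left hv.disjoint, hTT', union_sdiff_cancel_left hw.disjoint]
  exact hS.unique hS'

end Balloons

section BalloonIdeal

variable {S : Finset (ℤ × ℤ)} {v : Fin 4 → ℤ × ℤ} {α ρ τ : PPerm} {c : Fin 4}

/-- The permutation obtained from the 2413-balloon of `α` by deleting one frame point; see
`HasPattern.insert_three_corners`. -/
noncomputable def addThreeCorners (c : Fin 4) (α : PPerm) : PPerm :=
  addCorner (c + 2) (addCorner (c + 1) (addCorner c α))

lemma HasPattern.insert_three_corners (hS : HasPattern S α) (hv : IsFrame v S) (c : Fin 4) :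
    HasPattern (insert (v (c + 2)) (insert (v (c + 1)) (insert (v c) S)))
      (addThreeCorners c α) := by
  have hv₁ := hv (c + 1)
  have hv₂ := hv (c + 2)
  rw [show c + 1 + 3 = c by grind] at hv₁
  rw [show c + 2 + 2 = c by grind, show c + 2 + 3 = c + 1 by grind, insert_comm] at hv₂
  exact ((hS.insert_corner (hv.isCorner c)).insert_corner
    (hv₁.mono (subset_insert _ _))).insert_corner hv₂

lemma le_balloon_iff :
    τ ≤ balloon α ↔ (∃ c, τ ≤ addThreeCorners c α) ∨ ∃ ρ ≤ α, τ = balloon ρ := by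
  obtain ⟨v, S, hT, hS, hv⟩ := (hasPattern_plot (balloon α)).exists_eq_union_frame
  rw [(hasPattern_plot (balloon α)).le_iff, hT]
  constructor
  · rintro ⟨T, hTS, hτ⟩
    by_cases hvT : univ.image v ⊆ T
    · have hsub : T \ univ.image v ⊆ S := sdiff_le_iff.mpr hTS
      obtain ⟨ρ, hρ⟩ := IsGeneric.exists_hasPattern (hS.isGeneric.mono hsub)
      refine Or.inr ⟨ρ, hρ.mono hS hsub, hτ.unique ?_⟩
      simpa only [union_sdiff_of_subset hvT] using hρ.union_frame (hv.mono hsub)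
    · obtain ⟨d, hd⟩ : ∃ d, v d ∉ T := by simpa [subset_iff] using hvT
      refine Or.inl ⟨d + 1, hτ.mono (hS.insert_three_corners hv (d + 1)) fun p hp => ?_⟩
      simp only [mem_insert]
      rcases mem_union.mp (hTS hp) with hpv | hpS
      · obtain ⟨e, -, rfl⟩ := mem_image.mp hpv
        have hed : e ≠ d := fun h => hd (h ▸ hp)
        rcases eq_add_of_fin_four (d + 1) e with rfl | rfl | rfl | rfl
        exacts [.inr (.inr (.inl rfl)), .inr (.inl rfl), .inl rfl, absurd hed (by grind)]
      · exact .inr (.inr (.inr hpS))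
  · rintro (⟨c, hτ⟩ | ⟨ρ, hρ, rfl⟩)
    · obtain ⟨T, hT, hτ⟩ := (hS.insert_three_corners hv c).le_iff.mp hτ
      refine ⟨T, hT.trans ?_, hτ⟩
      simp [insert_subset_iff, subset_union_right]
    · obtain ⟨T, hT, hρ⟩ := hS.le_iff.mp hρ
      exact ⟨_, union_subset_union_right hT, hρ.union_frame (hv.mono hT)⟩

lemma le_balloon (α : PPerm) : α ≤ balloon α :=
  (hasPattern_plot α).mono (hasPattern_balloonPlot α) subset_union_right

lemma balloon_ne_one (α : PPerm) : balloon α ≠ one := fun h =>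
  balloon_ne_addCorner α ⊥ 0 (h.trans (addCorner_bot 0).symm)

lemma balloon_le_addThreeCorners_iff : balloon ρ ≤ addThreeCorners c α ↔ balloon ρ ≤ α := by
  simp [addThreeCorners, le_addCorner_iff, balloon_ne_addCorner]

end BalloonIdeal

/-! ### The Möbius sum over the permutations below a balloon that miss a frame point -/

section MobiusSums

variable {α β γ ρ σ τ : PPerm} {c d : Fin 4}

lemma addCorner_addCorner_ne_addCorner (hd : d ≠ c + 1) (hd' : d ≠ c + 3) :
    addCorner (c + 1) (addCorner c τ) ≠ addCorner d γ :=
  addCorner_ne_addCorner hd (by grind) (addCorner_ne_bot c τ)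

lemma mu_one_addThreeCorners (c : Fin 4) (τ : PPerm) :
    mu one (addThreeCorners c τ) = -mu one (addCorner (c + 1) (addCorner c τ)) := by
  refine mu_one_addCorner_of_notMem_range (addCorner_ne_bot _ _) ?_
  rintro ⟨γ, hγ⟩
  exact addCorner_addCorner_ne_addCorner (by grind) (by grind) hγ.symm

lemma addThreeCorners_injective :
    Function.Injective fun x : Fin 4 × PPerm => addThreeCorners x.1 x.2 := by
  rintro ⟨c, τ⟩ ⟨d, σ⟩ h
  rcases addCorner_eq_addCorner h with ⟨hcd, h⟩ | ⟨h, -⟩ | ⟨hcd, γ, h, -⟩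
  · obtain rfl : c = d := add_right_cancel hcd
    exact congrArg _ (addCorner_injective c (addCorner_injective (c + 1) h))
  · exact absurd h (addCorner_ne_bot _ _)
  · exact absurd h (addCorner_addCorner_ne_addCorner (by grind) (by grind))

lemma eq_of_addCorner_addCorner_eq (hτ : τ ≠ ⊥)
    (h : addCorner (c + 1) (addCorner c τ) = addCorner (d + 1) (addCorner d σ)) :
    c = d ∧ τ = σ := by
  rcases addCorner_eq_addCorner h with ⟨hcd, h⟩ | ⟨h, -⟩ | ⟨hcd, γ, h, -⟩
  · obtain rfl : c = d := add_right_cancel hcd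
    exact ⟨rfl, addCorner_injective c h⟩
  · exact absurd h (addCorner_ne_bot _ _)
  · exact absurd h (addCorner_ne_addCorner (by grind) (by grind) hτ)

lemma eq_addCorner_of_addCorner_addCorner_eq_addThreeCorners (hτ : τ ≠ ⊥)
    (h : addCorner (c + 1) (addCorner c τ) = addThreeCorners d σ) : τ = addCorner d σ := by
  rcases addCorner_eq_addCorner h with ⟨hcd, h⟩ | ⟨h, -⟩ | ⟨hcd, γ, h, -⟩
  · obtain rfl : c = d + 1 := by grind
    exact addCorner_injective _ h
  · exact absurd h (addCorner_ne_bot _ _)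
  · exact absurd h (addCorner_ne_addCorner (by grind) (by grind) hτ)

/-- The permutations contained in a permutation obtained from `β` by adding points in two opposite
corners. -/
noncomputable def oppositeIdeal (β : PPerm) : Finset PPerm :=
  Iic (addCorner 2 (addCorner 0 β)) ∪ Iic (addCorner 3 (addCorner 1 β))

lemma mem_oppositeIdeal_iff (c : Fin 4) : τ ∈ oppositeIdeal β ↔
    τ ≤ addCorner (c + 2) (addCorner c β) ∨ τ ≤ addCorner (c + 3) (addCorner (c + 1) β) := by
  have h₀ := addCorner_comm 0 β
  have h₁ := addCorner_comm 1 β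
  rw [oppositeIdeal, mem_union, mem_Iic, mem_Iic]
  fin_cases c
  · exact Iff.rfl
  · simpa using h₀ ▸ or_comm
  · simpa using h₀ ▸ h₁ ▸ Iff.rfl
  · simpa using h₁ ▸ or_comm

lemma mem_oppositeIdeal_of_le (hτ : τ ≤ addCorner (c + 2) (addCorner c β)) :
    τ ∈ oppositeIdeal β :=
  (mem_oppositeIdeal_iff c).mpr (.inl hτ)

lemma mem_oppositeIdeal_of_le_addCorner (hτ : τ ≤ addCorner c β) : τ ∈ oppositeIdeal β :=
  mem_oppositeIdeal_of_le (hτ.trans (le_addCorner (c + 2) _))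

lemma mem_oppositeIdeal_of_le_of_mem (hτ : τ ≤ σ) (hσ : σ ∈ oppositeIdeal β) :
    τ ∈ oppositeIdeal β :=
  (mem_oppositeIdeal_iff 0).mpr <|
    ((mem_oppositeIdeal_iff 0).mp hσ).imp hτ.trans hτ.trans

lemma addCorner_addCorner_notMem_oppositeIdeal (hτ : τ ≠ ⊥) (hβ : ¬addCorner c τ ≤ β) :
    addCorner (c + 1) (addCorner c τ) ∉ oppositeIdeal β := by
  have hnot : ¬addCorner (c + 1) (addCorner c τ) ≤ β := fun h => hβ ((le_addCorner _ _).trans h)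
  rw [mem_oppositeIdeal_iff c]
  simp only [le_addCorner_iff, hnot, false_or]
  rintro ((⟨ρ, -, h⟩ | ⟨ρ, -, h⟩) | ⟨ρ, hρ, h⟩ | ⟨ρ, -, h⟩)
  · exact addCorner_addCorner_ne_addCorner (by grind) (by grind) h
  · exact addCorner_addCorner_ne_addCorner (by grind) (by grind) h
  · exact hβ (addCorner_injective (c + 1) h ▸ hρ)
  · rcases addCorner_eq_addCorner h with ⟨h, -⟩ | ⟨h, -⟩ | ⟨-, γ, h, -⟩
    exacts [absurd h (by grind), addCorner_ne_bot _ _ h,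
      addCorner_ne_addCorner (by grind) (by grind) hτ h]

lemma le_or_eq_addCorner_of_le_addCorner_addCorner (hτ : τ ≤ addCorner d (addCorner c β)) :
    τ ≤ β ∨ ∃ ρ, τ = addCorner c ρ ∨ τ = addCorner d ρ := by
  rcases le_addCorner_iff.mp hτ with hτ | ⟨ρ, -, hτ⟩
  · exact (le_addCorner_iff.mp hτ).imp_right fun ⟨ρ, _, hτ⟩ => ⟨ρ, .inl hτ⟩
  · exact .inr ⟨ρ, .inr hτ⟩

lemma le_or_eq_one_of_le_of_le (h₀ : τ ≤ addCorner 2 (addCorner 0 β))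
    (h₁ : τ ≤ addCorner 3 (addCorner 1 β)) : τ ≤ β ∨ τ = one := by
  rcases le_or_eq_addCorner_of_le_addCorner_addCorner h₀ with h | ⟨ρ, hρ⟩
  · exact .inl h
  rcases le_or_eq_addCorner_of_le_addCorner_addCorner h₁ with h | ⟨σ, hσ⟩
  · exact .inl h
  have hρ_bot : ρ = ⊥ := by
    by_contra hne
    rcases hρ with rfl | rfl <;> rcases hσ with h | h <;>
      exact addCorner_ne_addCorner (by decide) (by decide) hne h
  exact .inr (hρ.elim (fun h => h.trans (addCorner_eq_one_iff.mpr hρ_bot))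
    fun h => h.trans (addCorner_eq_one_iff.mpr hρ_bot))

lemma sum_oppositeIdeal_mu (β : PPerm) :
    ∑ τ ∈ oppositeIdeal β, mu one τ = -if β = ⊥ ∨ β = one then 1 else 0 := by
  have inter : Iic (addCorner 2 (addCorner 0 β)) ∩ Iic (addCorner 3 (addCorner 1 β)) =
      Iic (if β = ⊥ then one else β) := by
    ext τ
    simp only [mem_inter, mem_Iic]
    constructor
    · rintro ⟨h₀, h₁⟩
      split_ifs with hβ
      · exact (le_or_eq_one_of_le_of_le h₀ h₁).elim (fun h => h.trans (hβ ▸ bot_le)) le_of_eq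
      · exact (le_or_eq_one_of_le_of_le h₀ h₁).elim id fun h => h ▸ one_le_iff.mpr hβ
    · have le (c d : Fin 4) : (if β = ⊥ then one else β) ≤ addCorner d (addCorner c β) := by
        split_ifs
        · exact one_le_iff.mpr (addCorner_ne_bot _ _)
        · exact (le_addCorner _ _).trans (le_addCorner _ _)
      exact fun h => ⟨h.trans (le 0 2), h.trans (le 1 3)⟩
  have incl_excl := sum_union_inter (s₁ := Iic (addCorner 2 (addCorner 0 β)))
    (s₂ := Iic (addCorner 3 (addCorner 1 β))) (f := mu one)
  rw [inter] at incl_excl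
  have one_ne (c d : Fin 4) : one ≠ addCorner d (addCorner c β) := fun h =>
    addCorner_ne_bot c β (addCorner_eq_one_iff.mp h.symm)
  simp only [sum_Iic_mu, one_ne, if_false, add_zero] at incl_excl
  rw [oppositeIdeal, eq_neg_of_add_eq_zero_left incl_excl]
  congr 2
  split_ifs <;> simp_all [eq_comm]

/-- The permutations below the balloon of `β` that miss one of its frame points. -/
noncomputable def properIdeal (β : PPerm) : Finset PPerm :=
  univ.biUnion fun c => Iic (addThreeCorners c β)

lemma mem_properIdeal_iff : τ ∈ properIdeal β ↔ ∃ c, τ ≤ addThreeCorners c β := by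
  simp [properIdeal]

lemma mem_oppositeIdeal_or_of_le_addCorner_addCorner
    (hσ : σ ≤ addCorner (c + 1) (addCorner c β)) : σ ∈ oppositeIdeal β ∨
      ∃ τ ≤ β, ¬addCorner c τ ≤ β ∧ σ = addCorner (c + 1) (addCorner c τ) := by
  rcases le_addCorner_iff.mp hσ with hσ | ⟨ρ, hρ, rfl⟩
  · exact .inl (mem_oppositeIdeal_of_le_addCorner hσ)
  · by_cases hρβ : ρ ≤ β
    · exact .inl (mem_oppositeIdeal_of_le_addCorner (addCorner_mono _ hρβ))
    · obtain ⟨τ, hτ, rfl⟩ := (le_addCorner_iff.mp hρ).resolve_left hρβ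
      exact .inr ⟨τ, hτ, hρβ, rfl⟩

lemma oppositeIdeal_subset_properIdeal (β : PPerm) : oppositeIdeal β ⊆ properIdeal β := by
  intro σ hσ
  rw [mem_properIdeal_iff]
  have opposite_le (c : Fin 4) : addCorner (c + 2) (addCorner c β) ≤ addThreeCorners c β :=
    addCorner_mono _ (le_addCorner _ _)
  exact ((mem_oppositeIdeal_iff 0).mp hσ).elim (fun h => ⟨0, h.trans (opposite_le 0)⟩)
    fun h => ⟨1, h.trans (opposite_le 1)⟩

lemma mem_properIdeal_iff_mem_oppositeIdeal_or : σ ∈ properIdeal β ↔ σ ∈ oppositeIdeal β ∨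
    ∃ c, ∃ τ ≤ β, ¬addCorner c τ ≤ β ∧
      (σ = addCorner (c + 1) (addCorner c τ) ∨ σ = addThreeCorners c τ) := by
  constructor
  · rw [mem_properIdeal_iff]
    rintro ⟨c, hσ⟩
    have of_le_two (d : Fin 4) (h : σ ≤ addCorner (d + 1) (addCorner d β)) :=
      (mem_oppositeIdeal_or_of_le_addCorner_addCorner h).imp_right fun ⟨τ, hτ, hdτ, h⟩ =>
        (⟨d, τ, hτ, hdτ, .inl h⟩ : ∃ c, ∃ τ ≤ β, ¬addCorner c τ ≤ β ∧
          (σ = addCorner (c + 1) (addCorner c τ) ∨ σ = addThreeCorners c τ))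
    have hc : c + 2 = c + 1 + 1 := by grind
    rcases le_addCorner_iff.mp hσ with hσ | ⟨π, hπ, rfl⟩
    · exact of_le_two c hσ
    rcases le_addCorner_iff.mp hπ with hπ | ⟨ρ, hρ, rfl⟩
    · exact .inl (mem_oppositeIdeal_of_le (addCorner_mono _ hπ))
    by_cases hρβ : ρ ≤ β
    · exact of_le_two (c + 1) (hc ▸ addCorner_mono _ (addCorner_mono _ hρβ))
    · obtain ⟨τ, hτ, rfl⟩ := (le_addCorner_iff.mp hρ).resolve_left hρβ
      exact .inr ⟨c, τ, hτ, hρβ, .inr rfl⟩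
  · rintro (hσ | ⟨c, τ, hτ, -, rfl | rfl⟩)
    · exact oppositeIdeal_subset_properIdeal β hσ
    · exact mem_properIdeal_iff.mpr ⟨c, (addCorner_mono _ (addCorner_mono _ hτ)).trans
        (le_addCorner _ _)⟩
    · exact mem_properIdeal_iff.mpr ⟨c, addCorner_mono _ (addCorner_mono _ (addCorner_mono _ hτ))⟩

/-- Outside `oppositeIdeal β`, the permutations with two added corner points cancel against those
with three, as adding the third point negates the Möbius function. -/
lemma sum_properIdeal_mu_of_ne_bot (hβ : β ≠ ⊥) :
    ∑ τ ∈ properIdeal β, mu one τ = ∑ τ ∈ oppositeIdeal β, mu one τ := by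
  set J := (univ ×ˢ Iic β).filter fun x : Fin 4 × PPerm => ¬addCorner x.1 x.2 ≤ β with hJ
  set two : Fin 4 × PPerm → PPerm := fun x => addCorner (x.1 + 1) (addCorner x.1 x.2) with htwo
  set three : Fin 4 × PPerm → PPerm := fun x => addThreeCorners x.1 x.2 with hthree
  have mem_J {x} : x ∈ J ↔ x.2 ≤ β ∧ ¬addCorner x.1 x.2 ≤ β := by simp [hJ]
  have ne_bot {x} (hx : x ∈ J) : x.2 ≠ ⊥ := fun h =>
    (mem_J.mp hx).2 (by rw [h, addCorner_bot]; exact one_le_iff.mpr hβ)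
  have two_inj : Set.InjOn two J := fun x hx y _ h =>
    have ⟨h₁, h₂⟩ := eq_of_addCorner_addCorner_eq (ne_bot hx) h
    Prod.ext h₁ h₂
  have two_notMem {x} (hx : x ∈ J) : two x ∉ oppositeIdeal β :=
    addCorner_addCorner_notMem_oppositeIdeal (ne_bot hx) (mem_J.mp hx).2
  have disj : Disjoint (J.image two) (J.image three) := by
    simp only [disjoint_left, mem_image, not_exists, not_and]
    rintro _ ⟨x, hx, rfl⟩ y hy h
    have := eq_addCorner_of_addCorner_addCorner_eq_addThreeCorners (ne_bot hx) h.symm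
    exact (mem_J.mp hy).2 (this ▸ (mem_J.mp hx).1)
  have disj' : Disjoint (oppositeIdeal β) (J.image two ∪ J.image three) := by
    simp only [disjoint_right, mem_union, mem_image]
    rintro _ (⟨x, hx, rfl⟩ | ⟨x, hx, rfl⟩)
    · exact two_notMem hx
    · exact fun h => two_notMem hx (mem_oppositeIdeal_of_le_of_mem (le_addCorner _ _) h)
  have decomposition : properIdeal β = oppositeIdeal β ∪ (J.image two ∪ J.image three) := by
    ext σ
    simp only [mem_properIdeal_iff_mem_oppositeIdeal_or, mem_union, mem_image, mem_J, htwo, hthree,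
      Prod.exists]
    grind
  rw [decomposition, sum_union disj', sum_union disj, sum_image two_inj,
    sum_image addThreeCorners_injective.injOn]
  simp only [htwo, mu_one_addThreeCorners, sum_neg_distrib, add_neg_cancel, add_zero]

lemma sum_properIdeal_mu_bot :
    ∑ τ ∈ properIdeal ⊥, mu one τ = ∑ τ ∈ oppositeIdeal ⊥, mu one τ + 4 := by
  have decomposition : properIdeal ⊥ = oppositeIdeal ⊥ ∪ univ.image (addThreeCorners · ⊥) := by
    ext σ
    rw [mem_union, mem_image]
    constructor
    · rw [mem_properIdeal_iff_mem_oppositeIdeal_or]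
      rintro (hσ | ⟨c, τ, hτ, -, hσ⟩)
      · exact .inl hσ
      · obtain rfl := le_bot_iff.mp hτ
        refine hσ.imp (fun h => mem_oppositeIdeal_of_le (c := c + 3) ?_)
          fun h => ⟨c, mem_univ c, h.symm⟩
        rw [h, addCorner_bot, addCorner_bot, show c + 3 + 2 = c + 1 by grind]
    · rintro (hσ | ⟨c, -, rfl⟩)
      · exact oppositeIdeal_subset_properIdeal ⊥ hσ
      · exact mem_properIdeal_iff.mpr ⟨c, le_rfl⟩
  have disj : Disjoint (oppositeIdeal ⊥) (univ.image (addThreeCorners · ⊥)) := by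
    simp only [disjoint_right, mem_image, mem_univ, true_and]
    rintro _ ⟨c, rfl⟩ h
    have := (mem_oppositeIdeal_iff c).mp h
    rcases this with h | h <;>
    · have := Le.length_le h
      simp [addThreeCorners, length_addCorner] at this
  have mu_eq_one (c : Fin 4) : mu one (addThreeCorners c ⊥) = 1 := by
    rw [mu_one_addThreeCorners, addCorner_bot, mu_one_addCorner_one, neg_neg]
  have inj : Function.Injective (addThreeCorners · ⊥) := fun c d h =>
    (Prod.ext_iff.mp (addThreeCorners_injective (a₁ := (c, ⊥)) (a₂ := (d, ⊥)) h)).1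
  rw [decomposition, sum_union disj, sum_image inj.injOn]
  simp [mu_eq_one]

lemma sum_properIdeal_mu (β : PPerm) : ∑ τ ∈ properIdeal β, mu one τ =
    3 * (if β = ⊥ then 1 else 0) - if β = one then 1 else 0 := by
  rcases eq_or_ne β ⊥ with rfl | hβ
  · rw [sum_properIdeal_mu_bot, sum_oppositeIdeal_mu]
    simp [one_ne_bot.symm]
  · rw [sum_properIdeal_mu_of_ne_bot hβ, sum_oppositeIdeal_mu]
    simp [hβ]

lemma mu_one_balloon (α : PPerm) :
    mu one (balloon α) = mu one α + (if α ∈ Set.range balloon then mu one α else 0) -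
      3 * ((if α = ⊥ then 1 else 0) - if α = one then 1 else 0) := by
  revert α
  refine eq_of_forall_sum_Iic_eq fun α => ?_
  have Iic_balloon : Iic (balloon α) = properIdeal α ∪ (Iic α).image balloon := by
    ext τ
    simp [le_balloon_iff, mem_properIdeal_iff, eq_comm]
  have balloon_mem_iff (ρ : PPerm) : balloon ρ ∈ properIdeal α ↔ balloon ρ ≤ α := by
    simp [mem_properIdeal_iff, balloon_le_addThreeCorners_iff]
  rw [sum_Iic_comp_eq balloon_injective le_balloon Iic_balloon balloon_mem_iff]
  simp only [sum_add_distrib, sum_sub_distrib, ← mul_sum, sum_Iic_mu,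
    (balloon_ne_one α).symm, if_false, sum_properIdeal_mu, eq_comm (a := one)]
  have := sum_Iic_bot_sub_one α
  rw [sum_sub_distrib] at this
  rw [this]
  ring

end MobiusSums

section MobiusOfBalloon

variable {β π : PPerm}

lemma isBalloon2413_iff_balloonPlot_subset : IsBalloon2413 β π ↔
    π.1 = β.1 + 4 ∧ balloonPlot β ⊆ univ.image fun i => (-2, -2) + points π i := by
  refine and_congr_right fun hlen => ?_
  have mem_iff {a b : ℤ} (x y : ℕ) (hx : x < π.1) (ha : a = x - 2) (hb : b = y - 2) :
      (a, b) ∈ univ.image (fun i => (-2, -2) + points π i) ↔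
        ∀ i : Fin π.1, (i : ℕ) = x → (π.2 i : ℕ) = y := by
    have coords (i : Fin π.1) : (-2, -2) + points π i = (a, b) ↔
        (i : ℕ) = x ∧ (π.2 i : ℕ) = y := by
      simp only [points, Prod.mk_add_mk, Prod.mk.injEq]
      omega
    simp only [mem_image, mem_univ, true_and, coords]
    exact ⟨fun ⟨i, hi, hy⟩ j hj => Fin.ext (hj.trans hi.symm) ▸ hy,
      fun h => ⟨⟨x, hx⟩, rfl, h _ rfl⟩⟩
  have inner (t : Fin β.1) : points β t ∈ _ ↔ _ :=
    mem_iff (t + 2) (β.2 t + 2) (by omega) (by omega) (by omega)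
  have frame₀ := mem_iff (a := β.1) (b := -2) (β.1 + 2) 0 (by omega) (by omega) (by omega)
  have frame₁ := mem_iff (a := β.1 + 1) (b := β.1) (β.1 + 3) (β.1 + 2)
    (by omega) (by omega) (by omega)
  have frame₂ := mem_iff (a := -1) (b := β.1 + 1) 1 (β.1 + 3) (by omega) (by omega) (by omega)
  have frame₃ := mem_iff (a := -2) (b := -1) 0 1 (by omega) (by omega) (by omega)
  simp only [balloonPlot, plot, union_subset_iff, image_subset_iff, mem_univ, forall_const, inner,
    Fin.forall_fin_succ, framePoint, Matrix.cons_val_zero, Matrix.cons_val_succ,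
    IsEmpty.forall_iff, and_true, frame₀, frame₁, frame₂, frame₃]
  exact ⟨fun h => ⟨⟨fun i => (h i).2.2.2.1, fun i => (h i).2.2.2.2, fun i => (h i).2.1,
    fun i => (h i).1⟩, fun t i => (h i).2.2.1 t⟩,
    fun ⟨⟨h₀, h₁, h₂, h₃⟩, h⟩ p => ⟨h₃ p, h₂ p, fun t => h t p, h₀ p, h₁ p⟩⟩

lemma isBalloon2413_iff : IsBalloon2413 β π ↔ π = balloon β := by
  have shift : HasPattern (univ.image fun i => (-2, -2) + points π i) π :=
    ⟨_, fun i j => by simp [relPos, cmp_add_left], rfl⟩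
  rw [isBalloon2413_iff_balloonPlot_subset]
  constructor
  · rintro ⟨hlen, hsub⟩
    refine shift.unique ?_
    rw [← eq_of_subset_of_card_le hsub ?_]
    · exact hasPattern_balloonPlot β
    · rw [shift.card_eq, (hasPattern_balloonPlot β).card_eq, hlen, length_balloon]
  · rintro rfl
    refine ⟨length_balloon β, ((hasPattern_balloonPlot β).eq_image_of_subset_box ?_).subset⟩
    simp only [length_balloon, balloonPlot, mem_union]
    rintro p (hp | hp)
    · obtain ⟨c, -, rfl⟩ := mem_image.mp hp
      fin_cases c <;>
        simp only [framePoint, Matrix.cons_val, Fin.reduceFinMk, Fin.zero_eta, Fin.mk_one,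
          Set.mem_Ico] <;>
        omega
    · have := mem_plot_bounds hp
      simp only [Set.mem_Ico]
      omega

lemma p2413_eq_balloon_bot : p2413 = balloon ⊥ := by
  have apply_eq (i : Fin 4) : p2413.2 i = (![1, 3, 0, 2] : Fin 4 → Fin 4) i := rfl
  refine isBalloon2413_iff.mp ⟨rfl, show ∀ p : Fin 4, _ from fun p => ?_⟩
  refine ⟨?_, ?_, fun t => t.elim0, ?_, ?_⟩ <;> rw [apply_eq] <;> decide +revert

lemma balloon_ne_bot (α : PPerm) : balloon α ≠ ⊥ := fun h =>
  absurd (congrArg Sigma.fst h) (by simp [length_balloon])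

lemma mu_one_balloon_bot : mu one (balloon ⊥) = -3 := by
  rw [mu_one_balloon, if_neg (by simp [balloon_ne_bot]), mu_one_bot, if_pos rfl,
    if_neg one_ne_bot.symm]
  norm_num

lemma mu_one_balloon_one : mu one (balloon one) = 4 := by
  have hone : one ∉ Set.range balloon := fun ⟨γ, h⟩ => balloon_ne_one γ h
  rw [mu_one_balloon, if_neg hone, mu_self, if_neg one_ne_bot, if_pos rfl]
  norm_num

lemma mu_one_balloon_of_mem_range (hβ : β ∈ Set.range balloon) :
    mu one (balloon β) = 2 * mu one β := by
  obtain ⟨γ, rfl⟩ := hβ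
  rw [mu_one_balloon, if_pos ⟨γ, rfl⟩, if_neg (balloon_ne_bot γ), if_neg (balloon_ne_one γ)]
  ring

lemma mu_one_balloon_of_notMem_range (hβ : β ∉ Set.range balloon) (hbot : β ≠ ⊥)
    (hone : β ≠ one) : mu one (balloon β) = mu one β := by
  rw [mu_one_balloon, if_neg hβ, if_neg hbot, if_neg hone]
  ring

lemma length_pos_iff_ne_bot : 0 < β.1 ↔ β ≠ ⊥ :=
  Nat.pos_iff_ne_zero.trans
    (not_congr ⟨eq_bot_of_length_eq_zero, fun h => congrArg Sigma.fst h⟩)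

end MobiusOfBalloon

end PPerm

/-- **(Theorem `theorem-2413-balloons`.)**  Let `β` be a nonempty permutation
and `π = B(β)` its 2413-balloon.  Then `μ(1,π) = 4` if `β = 1`;
`μ(1,π) = −6` if `β = 2413`; `μ(1,π) = 2·μ(1,β)` if `β` is a 2413-balloon;
and `μ(1,π) = μ(1,β)` otherwise. -/
theorem mu_of_balloon (β π : PPerm) (hβ : 0 < β.1) (hπ : IsBalloon2413 β π) :
    (β = PPerm.one → mu PPerm.one π = 4) ∧
    (β = p2413 → mu PPerm.one π = -6) ∧
    ((∃ γ : PPerm, 0 < γ.1 ∧ IsBalloon2413 γ β) →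
      mu PPerm.one π = 2 * mu PPerm.one β) ∧
    (β ≠ PPerm.one → β ≠ p2413 → ¬ (∃ γ : PPerm, 0 < γ.1 ∧ IsBalloon2413 γ β) →
      mu PPerm.one π = mu PPerm.one β) := by
  obtain rfl := PPerm.isBalloon2413_iff.mp hπ
  have hβ_bot : β ≠ ⊥ := PPerm.length_pos_iff_ne_bot.mp hβ
  simp only [PPerm.isBalloon2413_iff, PPerm.p2413_eq_balloon_bot]
  refine ⟨?_, ?_, ?_, fun hone hbot hγ => ?_⟩
  · rintro rfl
    exact PPerm.mu_one_balloon_one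
  · rintro rfl
    rw [PPerm.mu_one_balloon_of_mem_range ⟨⊥, rfl⟩, PPerm.mu_one_balloon_bot]
    norm_num
  · rintro ⟨γ, -, rfl⟩
    exact PPerm.mu_one_balloon_of_mem_range ⟨γ, rfl⟩
  · have hrange : β ∉ Set.range PPerm.balloon := by
      rintro ⟨γ, rfl⟩
      exact hγ ⟨γ, PPerm.length_pos_iff_ne_bot.mpr (mt (congrArg PPerm.balloon) hbot), rfl⟩
    exact PPerm.mu_one_balloon_of_notMem_range hrange hβ_bot hone
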